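/- arXiv:0909.4767 — 2 statements merged into one kernel-verified Lean document; each statement's English description precedes it below -/
import Mathlib

section
/- Let n ≥ 1 and for 0 ≤ k ≤ n define K_k(w) = Σ_{i=0}^{w} (−1)^i · C(w, i) · C(n−w, k−i). Then the Krawtchouk polynomials satisfy the orthogonality relations: for all 0 ≤ k, l ≤ n, (1/2^n) · Σ_{w=0}^{n} C(n, w) · K_k(w) · K_l(w) = δ_{k,l} · C(n, k). -/
/-- The value `K_k(w)` of the binary Krawtchouk polynomial of degree `k` and parameter `n`:
`K_k(w) = ∑_{i=0}^{w} (-1)^i C(w, i) C(n-w, k-i)`, where the binomial coefficient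
`C(a, b)` is zero when `b < 0` (encoded via the `if i ≤ k` guard) or `b > a`. -/
def kraw (n k w : ℕ) : ℤ :=
  ∑ i ∈ Finset.range (w + 1),
    if i ≤ k then (-1 : ℤ) ^ i * (w.choose i) * ((n - w).choose (k - i)) else 0

/-!
Summed over `w` with weights `C(n, w)`, the products of the generating functions
`∑ₖ K_k(w) xᵏ = (1 - x)ʷ (1 + x)ⁿ⁻ʷ` in `x` and in `y` are the binomial expansion of
`((1 - x)(1 - y) + (1 + x)(1 + y))ⁿ = 2ⁿ (1 + x y)ⁿ`. The orthogonality relations are the equality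
of the coefficients of `yˡ`, and then of `xᵏ`.
-/

section Krawtchouk

open Polynomial Finset

lemma kraw_eq_sum_antidiagonal (n k w : ℕ) :
    kraw n k w =
      ∑ p ∈ antidiagonal k, (-1 : ℤ) ^ p.1 * w.choose p.1 * (n - w).choose p.2 := by
  rw [Nat.sum_antidiagonal_eq_sum_range_succ_mk, kraw, ← sum_filter]
  refine sum_subset_zero_on_sdiff (fun i hi ↦ ?_) (fun i hi ↦ ?_) fun i _ ↦ rfl
  · simp only [mem_filter, mem_range] at hi ⊢
    omega
  · have hwi : w < i := by
      simp only [mem_sdiff, mem_filter, mem_range] at hi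
      omega
    simp [Nat.choose_eq_zero_of_lt hwi]

lemma coeff_one_add_C_mul_X_pow {R : Type*} [CommSemiring R] (a : R) (n k : ℕ) :
    ((1 + C a * X : R[X]) ^ n).coeff k = a ^ k * n.choose k := by
  have hcomp : (1 + C a * X : R[X]) ^ n = ((1 + X : R[X]) ^ n).comp (C a * X) := by
    simp only [pow_comp, add_comp, one_comp, X_comp]
  rw [hcomp, comp_C_mul_X_coeff, coeff_one_add_X_pow, mul_comm]

variable {R : Type*} [CommRing R]

lemma coeff_one_sub_X_pow (n k : ℕ) :
    ((1 - X : R[X]) ^ n).coeff k = (-1) ^ k * n.choose k := by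
  simpa [sub_eq_add_neg] using coeff_one_add_C_mul_X_pow (-1 : R) n k

lemma coeff_one_sub_X_pow_mul_one_add_X_pow (n k w : ℕ) :
    ((1 - X : R[X]) ^ w * (1 + X) ^ (n - w)).coeff k = (kraw n k w : R) := by
  rw [coeff_mul, kraw_eq_sum_antidiagonal]
  simp only [coeff_one_sub_X_pow, coeff_one_add_X_pow]
  push_cast
  simp only [mul_assoc]

lemma sum_choose_mul_one_sub_pow_mul_one_add_pow (n : ℕ) (x y : R) :
    ∑ w ∈ range (n + 1), (n.choose w : R) * ((1 - x) ^ w * (1 + x) ^ (n - w)) *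
        ((1 - y) ^ w * (1 + y) ^ (n - w)) =
      2 ^ n * (1 + x * y) ^ n := by
  have hbase : (1 - x) * (1 - y) + (1 + x) * (1 + y) = 2 * (1 + x * y) := by ring
  rw [← mul_pow, ← hbase, add_pow]
  refine sum_congr rfl fun w _ ↦ ?_
  simp only [mul_pow]
  ring

lemma sum_choose_mul_one_sub_pow_mul_one_add_pow_mul_kraw (n l : ℕ) (x : R) :
    ∑ w ∈ range (n + 1), (n.choose w : R) * ((1 - x) ^ w * (1 + x) ^ (n - w)) * kraw n l w =
      2 ^ n * (x ^ l * n.choose l) := by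
  have hsub : 1 - C x = C (1 - x) := by rw [C_sub, C_1]
  have hadd : 1 + C x = C (1 + x) := by rw [C_add, C_1]
  have htwo : (2 : R[X]) = C 2 := (C_ofNat 2).symm
  have hgen := congrArg (coeff · l) (sum_choose_mul_one_sub_pow_mul_one_add_pow n (C x) X)
  simpa only [hsub, hadd, htwo, ← C_eq_natCast, ← C_pow, ← C_mul, finsetSum_coeff, coeff_C_mul,
    coeff_one_sub_X_pow_mul_one_add_X_pow, coeff_one_add_C_mul_X_pow] using hgen

theorem krawtchouk_orthogonality_general (n k l : ℕ) :
    ∑ w ∈ range (n + 1), (n.choose w : R) * kraw n k w * kraw n l w =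
      if k = l then 2 ^ n * (n.choose k : R) else 0 := by
  have htwo : (2 : R[X]) = C 2 := (C_ofNat 2).symm
  have hgen := congrArg (coeff · k)
    (sum_choose_mul_one_sub_pow_mul_one_add_pow_mul_kraw n l (X : R[X]))
  simp only [htwo, ← C_eq_natCast, ← C_eq_intCast, ← C_pow, finsetSum_coeff, coeff_C_mul,
    coeff_mul_C, coeff_one_sub_X_pow_mul_one_add_X_pow, coeff_X_pow] at hgen
  rw [hgen]
  split_ifs with hkl <;> simp [hkl]

end Krawtchouk

/-- orthogonality relations for the binary Krawtchouk polynomials: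
`(1/2^n) ∑_{w=0}^{n} C(n,w) K_k(w) K_l(w) = δ_{k,l} C(n,k)` for `0 ≤ k, l ≤ n`. -/
theorem krawtchouk_orthogonality (n k l : ℕ) (hn : 1 ≤ n) (hk : k ≤ n) (hl : l ≤ n) :
    (1 / (2 : ℝ) ^ n) * ∑ w ∈ Finset.range (n + 1),
        (n.choose w : ℝ) * (kraw n k w : ℝ) * (kraw n l w : ℝ) =
      if k = l then (n.choose k : ℝ) else 0 := by
  rw [krawtchouk_orthogonality_general, mul_ite, mul_zero, one_div,
    inv_mul_cancel_left₀ (by positivity)]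
end

section
/- (Delsarte linear programming bound for binary codes.) Let n ≥ 1 and δ ≥ 1 be integers. Let f_0, f_1, …, f_n be real numbers with f_0 > 0 and f_k ≥ 0 for all k, and define F(w) = Σ_{k=0}^{n} f_k · K_k(w), where K_k(w) = Σ_{i=0}^{w} (−1)^i C(w, i) C(n−w, k−i) are the binary Krawtchouk polynomial values. If F(w) ≤ 0 for every integer w with δ ≤ w ≤ n, then every code C ⊆ F_2^n with minimal Hamming distance at least δ (d_H(c, c') ≥ δ for all distinct c, c' ∈ C) satisfies |C| ≤ F(0)/f_0. -/
/-!
`K_k(d(x, y))` is the value at `x - y` of the sum of all characters of `F_2^n` of weight `k`,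
so `∑_{x, y ∈ C} K_k(d(x, y))` is a sum of squares of character sums over `C`. Double counting
`∑_{x, y ∈ C} F(d(x, y))` now gives the bound: dropping every term but `k = 0` shows that it is at
least `f_0 |C|²`, and dropping the nonpositive off-diagonal pairs shows that it is at most
`|C| F(0)`.
-/

open Finset Polynomial

theorem coeff_prod_one_add_C_mul_X {ι R : Type*} [CommSemiring R] (s : Finset ι) (a : ι → R)
    (k : ℕ) :
    (∏ i ∈ s, (1 + C (a i) * X)).coeff k = ∑ t ∈ s.powersetCard k, ∏ i ∈ t, a i := by
  simp only [prod_one_add, prod_mul_distrib, prod_const, ← map_prod, finsetSum_coeff,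
    coeff_C_mul_X_pow, powersetCard_eq_filter, sum_filter, eq_comm]

theorem kraw_eq_coeff (n k w : ℕ) :
    kraw n k w = ((1 - X) ^ w * (1 + X) ^ (n - w) : ℤ[X]).coeff k := by
  have binomial : ((1 - X) ^ w : ℤ[X])
      = ∑ i ∈ range (w + 1), C ((-1) ^ i * (w.choose i : ℤ)) * X ^ i := by
    rw [sub_eq_neg_add, add_pow]
    refine sum_congr rfl fun i _ => ?_
    rw [neg_pow, one_pow, mul_one, C_mul, C_pow, C_neg, C_1, C_eq_natCast]
    ring
  simp only [binomial, sum_mul, finsetSum_coeff, mul_assoc, coeff_C_mul, coeff_X_pow_mul',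
    coeff_one_add_X_pow, mul_ite, mul_zero]
  simp only [kraw, mul_assoc]

theorem kraw_zero_right (n k : ℕ) : kraw n k 0 = n.choose k := by
  simp [kraw_eq_coeff, coeff_one_add_X_pow]

section Characters

variable {ι : Type*}

/-- The character `x ↦ (-1) ^ ∑ i ∈ S, x i` of `F_2^ι` indexed by `S`, written as a product of
signs. -/
def walsh (S : Finset ι) (x : ι → ZMod 2) : ℤˣ :=
  ∏ i ∈ S, (-1) ^ x i

theorem walsh_add (S : Finset ι) (x y : ι → ZMod 2) :
    walsh S (x + y) = walsh S x * walsh S y := by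
  simp only [walsh, Pi.add_apply, uzpow_add, prod_mul_distrib]

theorem walsh_neg (S : Finset ι) (x : ι → ZMod 2) : walsh S (-x) = walsh S x := by
  simp only [walsh, Pi.neg_apply, ZMod.neg_eq_self_mod_two]

variable [Fintype ι]

theorem prod_one_add_C_neg_one_pow_mul_X (x : ι → ZMod 2) :
    ∏ i, (1 + C (((-1 : ℤˣ) ^ x i : ℤˣ) : ℤ) * X)
      = (1 - X) ^ hammingNorm x * (1 + X) ^ (Fintype.card ι - hammingNorm x) := by
  have factor (a : ZMod 2) :
      1 + C (((-1 : ℤˣ) ^ a : ℤˣ) : ℤ) * X = if a ≠ 0 then 1 - X else 1 + X := by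
    obtain rfl | rfl : a = 0 ∨ a = 1 := by decide +revert
    · simp
    · simp [sub_eq_add_neg]
  have card_zeros : #{i | ¬x i ≠ 0} = Fintype.card ι - hammingNorm x := by
    classical rw [← compl_filter, card_compl, hammingNorm]
  simp only [factor, prod_ite, prod_const, card_zeros]
  rfl

theorem sum_walsh_eq_kraw (k : ℕ) (x : ι → ZMod 2) :
    ∑ S ∈ univ.powersetCard k, (walsh S x : ℤ) = kraw (Fintype.card ι) k (hammingNorm x) := by
  simp only [kraw_eq_coeff, ← prod_one_add_C_neg_one_pow_mul_X, coeff_prod_one_add_C_mul_X, walsh,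
    Units.coe_prod]

theorem sum_sum_kraw_hammingDist (k : ℕ) (A : Finset (ι → ZMod 2)) :
    ∑ x ∈ A, ∑ y ∈ A, kraw (Fintype.card ι) k (hammingDist x y)
      = ∑ S ∈ univ.powersetCard k, (∑ x ∈ A, (walsh S x : ℤ)) ^ 2 := by
  calc ∑ x ∈ A, ∑ y ∈ A, kraw (Fintype.card ι) k (hammingDist x y)
      = ∑ x ∈ A, ∑ y ∈ A, ∑ S ∈ univ.powersetCard k, (walsh S x : ℤ) * walsh S y := by
        simp only [hammingDist_eq_hammingNorm, ← sum_walsh_eq_kraw, walsh_add, walsh_neg,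
          Units.val_mul]
    _ = ∑ S ∈ univ.powersetCard k, ∑ x ∈ A, ∑ y ∈ A, (walsh S x : ℤ) * walsh S y := by
        simp only [sum_comm (t := univ.powersetCard k)]
    _ = ∑ S ∈ univ.powersetCard k, (∑ x ∈ A, (walsh S x : ℤ)) ^ 2 := by
        simp only [sq, sum_mul_sum]

theorem sum_sum_kraw_hammingDist_nonneg (k : ℕ) (A : Finset (ι → ZMod 2)) :
    0 ≤ ∑ x ∈ A, ∑ y ∈ A, kraw (Fintype.card ι) k (hammingDist x y) := by
  rw [sum_sum_kraw_hammingDist]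
  exact sum_nonneg fun S _ => sq_nonneg _

theorem sum_sum_kraw_zero_hammingDist (A : Finset (ι → ZMod 2)) :
    ∑ x ∈ A, ∑ y ∈ A, kraw (Fintype.card ι) 0 (hammingDist x y) = (#A : ℤ) ^ 2 := by
  simp [sum_sum_kraw_hammingDist, walsh]

end Characters

/-- The polynomial `F` of the linear programming bound: the combination `∑ f_k K_k` of the binary
Krawtchouk polynomials of parameter `n`, as a function of the distance `w`. -/
def krawSum {R : Type*} [Ring R] (n : ℕ) (f : ℕ → R) (w : ℕ) : R :=
  ∑ k ∈ range (n + 1), f k * kraw n k w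

theorem sum_sum_krawSum {R α : Type*} [Ring R] (n : ℕ) (f : ℕ → R) (A : Finset α)
    (d : α → α → ℕ) :
    ∑ x ∈ A, ∑ y ∈ A, krawSum n f (d x y)
      = ∑ k ∈ range (n + 1), f k * ((∑ x ∈ A, ∑ y ∈ A, kraw n k (d x y) : ℤ) : R) := by
  simp only [krawSum, Int.cast_sum, mul_sum, sum_comm (t := range (n + 1))]

theorem sum_sum_le_sum_diag {M α : Type*} [AddCommMonoid M] [PartialOrder M]
    [IsOrderedAddMonoid M] (A : Finset α) (g : α → α → M)
    (hg : ∀ x ∈ A, ∀ y ∈ A, x ≠ y → g x y ≤ 0) :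
    ∑ x ∈ A, ∑ y ∈ A, g x y ≤ ∑ x ∈ A, g x x := by
  classical
  refine sum_le_sum fun x hx => ?_
  rw [← add_sum_erase A (g x) hx]
  refine add_le_of_nonpos_right (sum_nonpos fun y hy => ?_)
  exact hg x hx y (mem_of_mem_erase hy) (ne_of_mem_erase hy).symm

theorem krawSum_zero_nonneg {R : Type*} [Ring R] [PartialOrder R] [IsOrderedRing R] (n : ℕ)
    (f : ℕ → R) (hf : ∀ k ≤ n, 0 ≤ f k) : 0 ≤ krawSum n f 0 := by
  refine sum_nonneg fun k hk => mul_nonneg (hf k (mem_range_succ_iff.mp hk)) ?_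
  rw [kraw_zero_right, Int.cast_natCast]
  exact Nat.cast_nonneg _

theorem mul_card_sq_le_sum_sum_krawSum {R ι : Type*} [Ring R] [PartialOrder R] [IsOrderedRing R]
    [Fintype ι] (f : ℕ → R) (hf : ∀ k ≤ Fintype.card ι, 0 ≤ f k) (A : Finset (ι → ZMod 2)) :
    f 0 * (#A : R) ^ 2
      ≤ ∑ x ∈ A, ∑ y ∈ A, krawSum (Fintype.card ι) f (hammingDist x y) := by
  let term (k : ℕ) : R :=
    f k * ((∑ x ∈ A, ∑ y ∈ A, kraw (Fintype.card ι) k (hammingDist x y) : ℤ) : R)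
  have term_nonneg : ∀ k ∈ range (Fintype.card ι + 1), 0 ≤ term k := fun k hk =>
    mul_nonneg (hf k (mem_range_succ_iff.mp hk))
      (Int.cast_nonneg (sum_sum_kraw_hammingDist_nonneg k A))
  calc f 0 * (#A : R) ^ 2
      = term 0 := by simp only [term, sum_sum_kraw_zero_hammingDist, Int.cast_pow, Int.cast_natCast]
    _ ≤ ∑ k ∈ range (Fintype.card ι + 1), term k :=
        single_le_sum term_nonneg (mem_range.mpr (Nat.succ_pos _))
    _ = _ := (sum_sum_krawSum ..).symm

theorem delsarte_lp_bound_general {R ι : Type*} [Ring R] [LinearOrder R] [IsStrictOrderedRing R]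
    [Fintype ι] (f : ℕ → R) (hf : ∀ k ≤ Fintype.card ι, 0 ≤ f k) (A : Finset (ι → ZMod 2))
    (hA : ∀ x ∈ A, ∀ y ∈ A, x ≠ y → krawSum (Fintype.card ι) f (hammingDist x y) ≤ 0) :
    f 0 * #A ≤ krawSum (Fintype.card ι) f 0 := by
  obtain rfl | hne := A.eq_empty_or_nonempty
  · simpa using krawSum_zero_nonneg _ f hf
  have card_pos : (0 : R) < #A := by exact_mod_cast hne.card_pos
  refine le_of_mul_le_mul_right ?_ card_pos
  calc f 0 * #A * #A
      = f 0 * (#A : R) ^ 2 := by rw [sq, mul_assoc]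
    _ ≤ ∑ x ∈ A, ∑ y ∈ A, krawSum (Fintype.card ι) f (hammingDist x y) :=
        mul_card_sq_le_sum_sum_krawSum f hf A
    _ ≤ ∑ x ∈ A, krawSum (Fintype.card ι) f (hammingDist x x) := sum_sum_le_sum_diag A _ hA
    _ = krawSum (Fintype.card ι) f 0 * #A := by
        simp only [hammingDist_self, sum_const, nsmul_eq_mul']

/-- the Delsarte linear programming bound for binary codes: if
`F(w) = ∑_{k=0}^n f_k K_k(w)` with `f_0 > 0`, `f_k ≥ 0`, and `F(w) ≤ 0` for all integers
`δ ≤ w ≤ n`, then every binary code `C ⊆ F_2^n` with minimal Hamming distance at least `δ`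
satisfies `|C| ≤ F(0)/f_0`. -/
theorem delsarte_lp_bound (n δ : ℕ) (hn : 1 ≤ n) (hδ : 1 ≤ δ) (f : ℕ → ℝ)
    (hf0 : 0 < f 0) (hf : ∀ k, k ≤ n → 0 ≤ f k)
    (hF : ∀ w : ℕ, δ ≤ w → w ≤ n →
      (∑ k ∈ Finset.range (n + 1), f k * (kraw n k w : ℝ)) ≤ 0)
    (C : Finset (Fin n → ZMod 2))
    (hC : ∀ c ∈ C, ∀ c' ∈ C, c ≠ c' → δ ≤ hammingDist c c') :
    (C.card : ℝ) ≤ (∑ k ∈ Finset.range (n + 1), f k * (kraw n k 0 : ℝ)) / f 0 := by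
  have bound := delsarte_lp_bound_general (ι := Fin n) f
  rw [Fintype.card_fin] at bound
  refine (le_div_iff₀' hf0).mpr (bound hf C fun c hc c' hc' hne => ?_)
  exact hF _ (hC c hc c' hc' hne) (hammingDist_le_card_fintype.trans_eq (Fintype.card_fin n))
end
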